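/- Consider full-batch momentum gradient descent on the 2-layer diagonal linear network with step size γ > 0 and momentum β ∈ (0,1). Assume (u_k, v_k) converges to (u_∞, v_∞) with Δ_∞ = |u_∞² − v_∞²| coordinatewise strictly positive, that each coordinate of the sequences (w_{+,k})_k and (w_{−,k})_k is nonzero and keeps a constant sign in k, and that for every coordinate i there exist indices k and k' with w_{+,k+1,i} ≠ w_{+,k,i} and w_{−,k'+1,i} ≠ w_{−,k',i}. Let S_± := (1/(1−β)) Σ_{k=1}^∞ [ r(w_{±,k+1}/w_{±,k}) + β·r(w_{±,k}/w_{±,k+1}) ] and θ̃₀ := (1/4)(w_{+,0}² ⊙ exp(−2S₊) − w_{−,0}² ⊙ exp(−2S₋)). Then, with α = max(‖u₀‖_∞, ‖v₀‖_∞): |θ̃₀,i| < α² and Δ_{∞,i} < Δ_{0,i} for every coordinate i. -/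

import Mathlib

open Real Filter Finset

open scoped RealInnerProductSpace

/-- `r(z) = (z − 1) − ln|z|` for `z ≠ 0`. -/
noncomputable def rfun (z : ℝ) : ℝ := (z - 1) - Real.log |z|


lemma rfun_nonneg_of_pos {z : ℝ} (hz : 0 < z) : 0 ≤ rfun z := by
  unfold rfun
  rw [abs_of_pos hz]
  linarith [Real.log_le_sub_one_of_pos hz]

lemma rfun_pos_of_ne {z : ℝ} (hz : 0 < z) (h1 : z ≠ 1) : 0 < rfun z := by
  unfold rfun
  rw [abs_of_pos hz]
  linarith [Real.log_lt_sub_one_of_pos hz h1]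

/-- The series has a positive sum. -/
lemma series_pos (β : ℝ) (hβ0 : 0 < β) (hβ1 : β < 1) (w : ℕ → ℝ)
    (h1 : w 1 = w 0) (hs : (∀ k, 0 < w k) ∨ (∀ k, w k < 0))
    (hm : ∃ k, w (k + 1) ≠ w k) (S : ℝ)
    (hS : Tendsto (fun N => (1 / (1 - β)) * ∑ k ∈ Finset.Icc 1 N,
      (rfun (w (k + 1) / w k) + β * rfun (w k / w (k + 1)))) atTop (nhds S)) : 0 < S := by
  have hq : ∀ j k, 0 < w j / w k := by
    intro j k
    rcases hs with h | h
    · exact div_pos (h j) (h k)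
    · exact div_pos_of_neg_of_neg (h j) (h k)
  have hne : ∀ k, w k ≠ 0 := by
    intro k
    rcases hs with h | h
    · exact (h k).ne'
    · exact (h k).ne
  have ht : ∀ k, 0 ≤ rfun (w (k + 1) / w k) + β * rfun (w k / w (k + 1)) := fun k =>
    add_nonneg (rfun_nonneg_of_pos (hq _ _)) (mul_nonneg hβ0.le (rfun_nonneg_of_pos (hq _ _)))
  have hc : 0 < 1 / (1 - β) := by
    apply one_div_pos.mpr; linarith
  obtain ⟨K, hK⟩ := hm
  have hK1 : 1 ≤ K := by
    rcases Nat.eq_zero_or_pos K with h | h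
    · subst h; exact absurd h1 hK
    · exact h
  have htK : 0 < rfun (w (K + 1) / w K) + β * rfun (w K / w (K + 1)) := by
    apply add_pos_of_pos_of_nonneg
    · apply rfun_pos_of_ne (hq _ _)
      intro h
      exact hK ((div_eq_one_iff_eq (hne K)).mp h)
    · exact mul_nonneg hβ0.le (rfun_nonneg_of_pos (hq _ _))
  refine lt_of_lt_of_le (mul_pos hc htK) (ge_of_tendsto hS ?_)
  filter_upwards [eventually_ge_atTop K] with N hN
  apply mul_le_mul_of_nonneg_left _ hc.le
  exact Finset.single_le_sum
    (f := fun k => rfun (w (k + 1) / w k) + β * rfun (w k / w (k + 1)))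
    (fun k _ => ht k) (Finset.mem_Icc.mpr ⟨hK1, hN⟩)

/-- Telescoped identity. -/
lemma telescoped (β : ℝ) (w c : ℕ → ℝ)
    (h1 : w 1 = w 0) (hne : ∀ k, w k ≠ 0)
    (hrec : ∀ k, 1 ≤ k → w (k + 1) = w k + c k * w k + β * (w k - w (k - 1))) (N : ℕ) :
    ∑ k ∈ Finset.Icc 1 N, (rfun (w (k + 1) / w k) + β * rfun (w k / w (k + 1)))
      + (1 - β) * (Real.log (w (N + 1)) - Real.log (w 0)) - β * (w N / w (N + 1) - 1)
      = ∑ k ∈ Finset.Icc 1 N, c k := by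
  induction N with
  | zero => simp [h1, div_self (hne 0)]
  | succ N ih =>
    rw [Finset.sum_Icc_succ_top (by omega), Finset.sum_Icc_succ_top (by omega), ← ih]
    have hr := hrec (N + 1) (by omega)
    have hcc : c (N + 1) = w (N + 1 + 1) / w (N + 1) - 1 + β * (w N / w (N + 1) - 1) := by
      have := hne (N + 1)
      simp only [Nat.add_sub_cancel] at hr
      field_simp
      linarith
    rw [hcc]
    unfold rfun
    rw [Real.log_abs, Real.log_abs, Real.log_div (hne _) (hne _), Real.log_div (hne _) (hne _)]
    ring

lemma sum_c_tendsto (β : ℝ) (hβ1 : β < 1) (w c : ℕ → ℝ)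
    (h1 : w 1 = w 0) (hne : ∀ k, w k ≠ 0)
    (hrec : ∀ k, 1 ≤ k → w (k + 1) = w k + c k * w k + β * (w k - w (k - 1)))
    (l : ℝ) (hl : l ≠ 0) (hw : Tendsto w atTop (nhds l)) (S : ℝ)
    (hS : Tendsto (fun N => (1 / (1 - β)) * ∑ k ∈ Finset.Icc 1 N,
      (rfun (w (k + 1) / w k) + β * rfun (w k / w (k + 1)))) atTop (nhds S)) :
    Tendsto (fun N => ∑ k ∈ Finset.Icc 1 N, c k) atTop
      (nhds ((1 - β) * (S + Real.log l - Real.log (w 0)))) := by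
  have hb : (1 - β) ≠ 0 := by linarith
  have hw1 : Tendsto (fun N => w (N + 1)) atTop (nhds l) := (tendsto_add_atTop_iff_nat 1).mpr hw
  have hlog := (((hw1.log hl).sub_const (Real.log (w 0))).const_mul (1 - β))
  have hd := (((hw.div hw1 hl).sub_const 1).const_mul β)
  have := ((hS.const_mul (1 - β)).add hlog).sub hd
  have e : (1 - β) * S + (1 - β) * (Real.log l - Real.log (w 0)) - β * (l / l - 1)
      = (1 - β) * (S + Real.log l - Real.log (w 0)) := by
    rw [div_self hl]; ring
  rw [e] at this
  refine this.congr fun N => ?_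
  rw [← telescoped β w c h1 hne hrec N, ← mul_assoc, mul_one_div_cancel hb, one_mul]
  rfl

/-- For full-batch MGD on the 2-layer diagonal linear network with `β ∈ (0,1)`,
if the iterates converge with strictly positive asymptotic balancedness, every coordinate of
`w_{±,k}` is nonzero and keeps a constant sign in `k`, and no coordinate sequence of `w_±` is
eventually constant from the start (there exist consecutive distinct values), then, with
`α = max(‖u₀‖_∞, ‖v₀‖_∞)`, the perturbed initialisation satisfies `|θ̃₀,i| < α²` and
`Δ_{∞,i} < Δ_{0,i}` for every coordinate `i`. -/
theorem stmt_19 {n d : ℕ}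
    (x : Fin n → EuclideanSpace ℝ (Fin d)) (y : Fin n → ℝ)
    (L : EuclideanSpace ℝ (Fin d) → ℝ)
    (hL : L = fun θ => (1 / (2 * (n : ℝ))) * ∑ i, (y i - ⟪x i, θ⟫) ^ 2)
    (γ β : ℝ) (hγ : 0 < γ) (hβ0 : 0 < β) (hβ1 : β < 1)
    (u v : ℕ → EuclideanSpace ℝ (Fin d))
    (θ : ℕ → EuclideanSpace ℝ (Fin d)) (hθ : ∀ k i, θ k i = u k i * v k i)
    (h1u : u 1 = u 0) (h1v : v 1 = v 0)
    (hrecu : ∀ k, 1 ≤ k → ∀ i,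
      u (k + 1) i = u k i - γ * (gradient L (θ k) i * v k i) + β * (u k i - u (k - 1) i))
    (hrecv : ∀ k, 1 ≤ k → ∀ i,
      v (k + 1) i = v k i - γ * (gradient L (θ k) i * u k i) + β * (v k i - v (k - 1) i))
    (ulim vlim : EuclideanSpace ℝ (Fin d))
    (hu : Tendsto u atTop (nhds ulim)) (hv : Tendsto v atTop (nhds vlim))
    (hDinfpos : ∀ i, 0 < |ulim i ^ 2 - vlim i ^ 2|)
    -- each coordinate of w_± is nonzero and keeps a constant sign in k
    (hsignp : ∀ i, (∀ k, 0 < u k i + v k i) ∨ (∀ k, u k i + v k i < 0))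
    (hsignm : ∀ i, (∀ k, 0 < u k i - v k i) ∨ (∀ k, u k i - v k i < 0))
    -- each coordinate of w_± takes at least two consecutive distinct values
    (hmovep : ∀ i, ∃ k, u (k + 1) i + v (k + 1) i ≠ u k i + v k i)
    (hmovem : ∀ i, ∃ k, u (k + 1) i - v (k + 1) i ≠ u k i - v k i)
    -- the sums S_± of the series
    (Sp Sm : Fin d → ℝ)
    (hSp : ∀ i,
      Tendsto
        (fun N => (1 / (1 - β)) *
          ∑ k ∈ Finset.Icc 1 N,
            (rfun ((u (k + 1) i + v (k + 1) i) / (u k i + v k i)) +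
              β * rfun ((u k i + v k i) / (u (k + 1) i + v (k + 1) i))))
        atTop (nhds (Sp i)))
    (hSm : ∀ i,
      Tendsto
        (fun N => (1 / (1 - β)) *
          ∑ k ∈ Finset.Icc 1 N,
            (rfun ((u (k + 1) i - v (k + 1) i) / (u k i - v k i)) +
              β * rfun ((u k i - v k i) / (u (k + 1) i - v (k + 1) i))))
        atTop (nhds (Sm i)))
    -- the perturbed initialisation
    (θtilde : EuclideanSpace ℝ (Fin d))
    (hθtilde : ∀ i, θtilde i = (1 / 4) *
      ((u 0 i + v 0 i) ^ 2 * Real.exp (-(2 * Sp i)) -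
        (u 0 i - v 0 i) ^ 2 * Real.exp (-(2 * Sm i))))
    -- the initialisation scale
    (α : ℝ) (hα : α = max (⨆ i, |u 0 i|) (⨆ i, |v 0 i|)) :
    ∀ i, |θtilde i| < α ^ 2 ∧ |ulim i ^ 2 - vlim i ^ 2| < |u 0 i ^ 2 - v 0 i ^ 2| := by
  intro i
  have hu0 : Tendsto (fun k => u k i) atTop (nhds (ulim i)) :=
    ((EuclideanSpace.proj (𝕜 := ℝ) i).continuous.tendsto ulim).comp hu
  have hv0 : Tendsto (fun k => v k i) atTop (nhds (vlim i)) :=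
    ((EuclideanSpace.proj (𝕜 := ℝ) i).continuous.tendsto vlim).comp hv
  have hnep : ∀ k, u k i + v k i ≠ 0 := fun k => by
    rcases hsignp i with h | h
    · exact (h k).ne'
    · exact (h k).ne
  have hnem : ∀ k, u k i - v k i ≠ 0 := fun k => by
    rcases hsignm i with h | h
    · exact (h k).ne'
    · exact (h k).ne
  have hfac : ∀ a b : ℝ, a ^ 2 - b ^ 2 = (a + b) * (a - b) := fun a b => by ring
  have hDl : (ulim i + vlim i) * (ulim i - vlim i) ≠ 0 := by
    rw [← hfac]; exact abs_pos.mp (hDinfpos i)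
  have hlp : ulim i + vlim i ≠ 0 := left_ne_zero_of_mul hDl
  have hlm : ulim i - vlim i ≠ 0 := right_ne_zero_of_mul hDl
  have hSp0 : 0 < Sp i := series_pos β hβ0 hβ1 (fun k => u k i + v k i)
    (by simp only [h1u, h1v]) (hsignp i) (hmovep i) (Sp i) (hSp i)
  have hSm0 : 0 < Sm i := series_pos β hβ0 hβ1 (fun k => u k i - v k i)
    (by simp only [h1u, h1v]) (hsignm i) (hmovem i) (Sm i) (hSm i)
  have hP := sum_c_tendsto β hβ1 (fun k => u k i + v k i) (fun k => -(γ * gradient L (θ k) i))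
    (by simp only [h1u, h1v]) hnep
    (fun k hk => by simp only [hrecu k hk i, hrecv k hk i]; ring) _ hlp (hu0.add hv0) _ (hSp i)
  have hM := sum_c_tendsto β hβ1 (fun k => u k i - v k i) (fun k => γ * gradient L (θ k) i)
    (by simp only [h1u, h1v]) hnem
    (fun k hk => by simp only [hrecu k hk i, hrecv k hk i]; ring) _ hlm (hu0.sub hv0) _ (hSm i)
  simp only [Finset.sum_neg_distrib] at hP
  have hP' := hP.neg
  simp only [neg_neg] at hP'
  have hkey := tendsto_nhds_unique hP' hM
  have hb : (1 - β) ≠ 0 := by linarith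
  have hkey2 : Real.log (ulim i + vlim i) + Real.log (ulim i - vlim i)
      = Real.log (u 0 i + v 0 i) + Real.log (u 0 i - v 0 i) - (Sp i + Sm i) := by
    apply mul_left_cancel₀ hb
    linarith
  constructor
  · have hui : |u 0 i| ≤ α := by
      rw [hα]
      exact (le_ciSup (f := fun i => |u 0 i|) (Set.finite_range _).bddAbove i).trans
        (le_max_left _ _)
    have hvi : |v 0 i| ≤ α := by
      rw [hα]
      exact (le_ciSup (f := fun i => |v 0 i|) (Set.finite_range _).bddAbove i).trans
        (le_max_right _ _)
    have hbp : (u 0 i + v 0 i) ^ 2 ≤ 4 * α ^ 2 := by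
      have : |u 0 i + v 0 i| ≤ 2 * α := (abs_add_le _ _).trans (by linarith)
      rw [← sq_abs]
      nlinarith [abs_nonneg (u 0 i + v 0 i)]
    have hbm : (u 0 i - v 0 i) ^ 2 ≤ 4 * α ^ 2 := by
      have : |u 0 i - v 0 i| ≤ 2 * α := (abs_sub _ _).trans (by linarith)
      rw [← sq_abs]
      nlinarith [abs_nonneg (u 0 i - v 0 i)]
    have hwp : 0 < (u 0 i + v 0 i) ^ 2 := sq_pos_of_ne_zero (hnep 0)
    have hwm : 0 < (u 0 i - v 0 i) ^ 2 := sq_pos_of_ne_zero (hnem 0)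
    have hep : Real.exp (-(2 * Sp i)) < 1 := Real.exp_lt_one_iff.mpr (by linarith)
    have hem : Real.exp (-(2 * Sm i)) < 1 := Real.exp_lt_one_iff.mpr (by linarith)
    have a1 := mul_lt_mul_of_pos_left hep hwp
    have a2 := mul_lt_mul_of_pos_left hem hwm
    have a3 := mul_pos hwp (Real.exp_pos (-(2 * Sp i)))
    have a4 := mul_pos hwm (Real.exp_pos (-(2 * Sm i)))
    rw [hθtilde i, abs_lt]
    constructor <;> linarith
  · rw [← Real.log_lt_log_iff (hDinfpos i)
      (by rw [hfac]; exact abs_pos.mpr (mul_ne_zero (hnep 0) (hnem 0))),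
      Real.log_abs, Real.log_abs, hfac, hfac, Real.log_mul hlp hlm,
      Real.log_mul (hnep 0) (hnem 0)]
    linarith
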